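/- arXiv:2210.05653 — 2 statements merged into one kernel-verified Lean document; each statement's English description precedes it below -/
import Mathlib

section
/- Let K be a field, n ≥ 2, and let f(x_1,…,x_m) be a multilinear polynomial over K. Then f is a polynomial identity for M_n(K) (i.e., f(a_1,…,a_m) = 0 for all a_1,…,a_m ∈ M_n(K)) if and only if f satisfies (S0). -/
/-- Evaluation of the multilinear polynomial `f(x₁,…,x_m) = ∑_{σ ∈ S_m} α_σ x_{σ(1)}⋯x_{σ(m)}`
given by coefficients `α` at the tuple `a`. -/
def mlEval {K A : Type} [Field K] [Ring A] [Algebra K A] {m : ℕ}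
    (α : Equiv.Perm (Fin m) → K) (a : Fin m → A) : A :=
  ∑ σ : Equiv.Perm (Fin m), α σ • (List.ofFn fun i => a (σ i)).prod

/-- The image of the multilinear polynomial with coefficients `α` on the algebra `A`. -/
def mlImage {K A : Type} [Field K] [Ring A] [Algebra K A] {m : ℕ}
    (α : Equiv.Perm (Fin m) → K) : Set A :=
  Set.range (mlEval α)

/-- `a` is homogeneous of degree `g` in the Vasilovsky `ZMod n`-grading of `Mₙ(K)`:
`a` lies in the span of the matrix units `E i j` with `j - i ≡ g (mod n)`. -/
def VasHomog {K : Type} [Field K] {n : ℕ} (g : ZMod n)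
    (a : Matrix (Fin n) (Fin n) K) : Prop :=
  ∀ i j : Fin n, ((j.val : ZMod n) - (i.val : ZMod n)) ≠ g → a i j = 0

/-- Statement (S0): `f` vanishes on homogeneous tuples whose degrees sum to `0`. -/
def StmtS0 {K : Type} [Field K] (n : ℕ) {m : ℕ} (α : Equiv.Perm (Fin m) → K) : Prop :=
  ∀ (g : Fin m → ZMod n) (a : Fin m → Matrix (Fin n) (Fin n) K),
    (∀ i, VasHomog (g i) (a i)) → (∑ i, g i) = 0 → mlEval α a = 0

/-- Statement (S1): `f` vanishes on homogeneous tuples whose degrees sum to a nonzero element. -/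
def StmtS1 {K : Type} [Field K] (n : ℕ) {m : ℕ} (α : Equiv.Perm (Fin m) → K) : Prop :=
  ∀ (g : Fin m → ZMod n) (a : Fin m → Matrix (Fin n) (Fin n) K),
    (∀ i, VasHomog (g i) (a i)) → (∑ i, g i) ≠ 0 → mlEval α a = 0

/-- Statement (S2): `f` has trace-zero values on homogeneous tuples whose degrees sum to `0`. -/
def StmtS2 {K : Type} [Field K] (n : ℕ) {m : ℕ} (α : Equiv.Perm (Fin m) → K) : Prop :=
  ∀ (g : Fin m → ZMod n) (a : Fin m → Matrix (Fin n) (Fin n) K),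
    (∀ i, VasHomog (g i) (a i)) → (∑ i, g i) = 0 → Matrix.trace (mlEval α a) = 0

/-- The set of scalar matrices in `Mₙ(K)`. -/
def scalarSet (K : Type) [Field K] (n : ℕ) : Set (Matrix (Fin n) (Fin n) K) :=
  {b | ∃ c : K, b = c • (1 : Matrix (Fin n) (Fin n) K)}

/-- The set `slₙ(K)` of trace-zero matrices in `Mₙ(K)`. -/
def slSet (K : Type) [Field K] (n : ℕ) : Set (Matrix (Fin n) (Fin n) K) :=
  {b | Matrix.trace b = 0}

/-!
Expanding the arguments into matrix units writes every value of `f` as a sum of values at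
homogeneous tuples. Those of degree `0` vanish by (S0), and those of nonzero degree have zero
diagonal, so (S0) forces every value of `f` to have zero diagonal. The values of `f` are closed
under conjugation, and a matrix all of whose conjugates have zero diagonal is zero: conjugating by
a transvection adds any chosen off-diagonal entry to a diagonal one.
-/

section MultilinearEval

variable {R A B : Type*} [CommSemiring R] [Semiring A] [Algebra R A] [Semiring B] [Algebra R B]
  {m : ℕ}

/-- The multilinear map `a ↦ ∑ σ, α σ • (a (σ 0) * ⋯ * a (σ (m - 1)))` defined on an algebra by the
multilinear polynomial with coefficients `α`; this is `mlEval` over an arbitrary commutative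
semiring, bundled so that arguments can be expanded by `MultilinearMap.map_sum`. -/
def multilinearEval (α : Equiv.Perm (Fin m) → R) : MultilinearMap R (fun _ : Fin m => A) A :=
  ∑ σ, α σ • (MultilinearMap.mkPiAlgebraFin R m A).domDomCongr σ

theorem multilinearEval_apply (α : Equiv.Perm (Fin m) → R) (a : Fin m → A) :
    multilinearEval α a = ∑ σ, α σ • (List.ofFn fun k => a (σ k)).prod := by
  simp [multilinearEval]

theorem map_multilinearEval (φ : A →ₐ[R] B) (α : Equiv.Perm (Fin m) → R) (a : Fin m → A) :
    φ (multilinearEval α a) = multilinearEval α fun k => φ (a k) := by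
  simp only [multilinearEval_apply, map_sum, map_smul, map_list_prod, List.map_ofFn,
    Function.comp_def]

theorem multilinearEval_units_conj (α : Equiv.Perm (Fin m) → R) (u : Aˣ) (a : Fin m → A) :
    multilinearEval α (fun k => ↑u * a k * ↑u⁻¹) = ↑u * multilinearEval α a * ↑u⁻¹ :=
  (map_multilinearEval (MulSemiringAction.toAlgHom R A (ConjAct.toConjAct u)) α a).symm

theorem multilinearEval_mem_graded {G : Type*} [AddCommMonoid G] (𝒜 : G → Submodule R A)
    [SetLike.GradedMonoid 𝒜] (α : Equiv.Perm (Fin m) → R) {g : Fin m → G} {a : Fin m → A}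
    (ha : ∀ k, a k ∈ 𝒜 (g k)) : multilinearEval α a ∈ 𝒜 (∑ k, g k) := by
  rw [multilinearEval_apply]
  refine sum_mem fun σ _ => Submodule.smul_mem _ _ ?_
  rw [← Equiv.sum_comp σ g, ← List.sum_ofFn]
  exact SetLike.list_prod_ofFn_mem_graded _ _ fun k => ha (σ k)

end MultilinearEval

theorem mlEval_eq_multilinearEval {K A : Type} [Field K] [Ring A] [Algebra K A] {m : ℕ}
    (α : Equiv.Perm (Fin m) → K) (a : Fin m → A) : mlEval α a = multilinearEval α a :=
  (multilinearEval_apply α a).symm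

theorem matrix_eq_zero_of_forall_units_conj_diag_eq_zero {R ι : Type*} [CommRing R] [Fintype ι]
    [DecidableEq ι] {M : Matrix ι ι R}
    (h : ∀ (u : (Matrix ι ι R)ˣ) (i : ι), (u.val * M * u⁻¹.val) i i = 0) : M = 0 := by
  have diag_eq_zero (i : ι) : M i i = 0 := by simpa using h 1 i
  ext i j
  obtain rfl | hij := eq_or_ne i j
  · exact diag_eq_zero i
  let u : (Matrix ι ι R)ˣ :=
    { val := Matrix.transvection j i 1
      inv := Matrix.transvection j i (-1)
      val_inv := by simp [Matrix.transvection_mul_transvection_same, hij.symm]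
      inv_val := by simp [Matrix.transvection_mul_transvection_same, hij.symm] }
  have conj_apply : (u.val * M * u⁻¹.val) j j = M j j + M i j := by
    simp only [u, Units.inv_mk]
    rw [Matrix.mul_transvection_apply_of_ne _ _ _ _ hij.symm,
      Matrix.transvection_mul_apply_same, one_mul]
  simpa [diag_eq_zero] using conj_apply.symm.trans (h u j)

section ElementaryGrading

variable {R ι G : Type*} [CommSemiring R] [AddCommGroup G]

/-- The component of degree `g` in the elementary grading of `Matrix ι ι R` induced by a weight
function `d : ι → G`, in which the matrix unit `E i j` has degree `d j - d i`. The Vasilovsky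
grading is the case `ι = Fin n`, `G = ZMod n`, `d i = i`. -/
def elementaryGrading (R : Type*) [CommSemiring R] (d : ι → G) (g : G) :
    Submodule R (Matrix ι ι R) where
  carrier := {a | ∀ i j, d j - d i ≠ g → a i j = 0}
  zero_mem' _ _ _ := rfl
  add_mem' ha hb i j hij := by simp [ha i j hij, hb i j hij]
  smul_mem' c a ha i j hij := by simp [ha i j hij]

theorem mem_elementaryGrading {d : ι → G} {g : G} {a : Matrix ι ι R} :
    a ∈ elementaryGrading R d g ↔ ∀ i j, d j - d i ≠ g → a i j = 0 :=
  Iff.rfl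

theorem single_mem_elementaryGrading [DecidableEq ι] (d : ι → G) (i j : ι) (c : R) :
    Matrix.single i j c ∈ elementaryGrading R d (d j - d i) := by
  intro k l hkl
  refine Matrix.single_apply_of_ne _ _ _ _ _ ?_
  rintro ⟨rfl, rfl⟩
  exact hkl rfl

theorem diag_eq_zero_of_mem_elementaryGrading {d : ι → G} {g : G} (hg : g ≠ 0) {a : Matrix ι ι R}
    (ha : a ∈ elementaryGrading R d g) (i : ι) : a i i = 0 :=
  ha i i (by simpa using hg.symm)

variable [Fintype ι] [DecidableEq ι]

instance elementaryGrading.gradedMonoid (d : ι → G) :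
    SetLike.GradedMonoid (elementaryGrading R d) where
  one_mem i j hij := Matrix.one_apply_ne (by rintro rfl; exact hij (sub_self _))
  mul_mem g h a b ha hb i j hij := by
    rw [Matrix.mul_apply]
    refine Finset.sum_eq_zero fun l _ => ?_
    by_cases hil : d l - d i = g
    · have hlj : d j - d l ≠ h := by
        rintro rfl
        exact hij (by rw [← hil]; abel)
      rw [hb l j hlj, mul_zero]
    · rw [ha i l hil, zero_mul]

theorem multilinearEval_diag_eq_zero (d : ι → G) {m : ℕ} {α : Equiv.Perm (Fin m) → R}
    (h : ∀ (g : Fin m → G) (a : Fin m → Matrix ι ι R),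
      (∀ k, a k ∈ elementaryGrading R d (g k)) → ∑ k, g k = 0 → multilinearEval α a = 0)
    (a : Fin m → Matrix ι ι R) (i : ι) : multilinearEval α a i i = 0 := by
  have expand_units : a = fun k => ∑ p : ι × ι, Matrix.single p.1 p.2 (a k p.1 p.2) := by
    funext k
    rw [Fintype.sum_prod_type]
    exact Matrix.matrix_eq_sum_single (a k)
  rw [expand_units, MultilinearMap.map_sum, Matrix.sum_apply]
  refine Finset.sum_eq_zero fun p _ => ?_
  have homogeneous (k : Fin m) := single_mem_elementaryGrading d (p k).1 (p k).2
    (a k (p k).1 (p k).2)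
  by_cases degree_eq_zero : ∑ k, (d (p k).2 - d (p k).1) = 0
  · rw [h _ _ homogeneous degree_eq_zero, Matrix.zero_apply]
  · exact diag_eq_zero_of_mem_elementaryGrading degree_eq_zero
      (multilinearEval_mem_graded _ α homogeneous) i

end ElementaryGrading

theorem stmt_0_general {R ι G : Type*} [CommRing R] [Fintype ι] [DecidableEq ι] [AddCommGroup G]
    (d : ι → G) {m : ℕ} (α : Equiv.Perm (Fin m) → R) :
    (∀ a : Fin m → Matrix ι ι R, multilinearEval α a = 0) ↔
      ∀ (g : Fin m → G) (a : Fin m → Matrix ι ι R),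
        (∀ k, a k ∈ elementaryGrading R d (g k)) → ∑ k, g k = 0 → multilinearEval α a = 0 := by
  refine ⟨fun h _ a _ _ => h a, fun h a => ?_⟩
  refine matrix_eq_zero_of_forall_units_conj_diag_eq_zero fun u i => ?_
  rw [← multilinearEval_units_conj]
  exact multilinearEval_diag_eq_zero d h _ i

/-- a multilinear polynomial is a polynomial identity for `Mₙ(K)`
iff it satisfies (S0). -/
theorem stmt_0 {K : Type} [Field K] (n : ℕ) (hn : 2 ≤ n) {m : ℕ}
    (α : Equiv.Perm (Fin m) → K) :
    (∀ a : Fin m → Matrix (Fin n) (Fin n) K, mlEval α a = 0) ↔ StmtS0 n α := by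
  simpa only [StmtS0, VasHomog, mlEval_eq_multilinearEval, mem_elementaryGrading] using
    stmt_0_general (fun i : Fin n => (i.val : ZMod n)) α
end

section
/- Let K be a field, n ≥ 2, and let f(x_1,…,x_m) be a multilinear polynomial over K. Then f is a polynomial identity for M_n(K) if and only if for every family a_1,…,a_k of homogeneous matrices whose K-linear span is all of M_n(K), one has f(a_{i_1},…,a_{i_m}) = 0 for all choices i_1,…,i_m ∈ {1,…,k} such that deg(a_{i_1}) + ⋯ + deg(a_{i_m}) = 0 in Z/nZ. -/
/-!
The diagonal of `f(x₁, …, x_m)` is a multilinear function of the `xᵢ`, so it is determined by its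
values on a spanning family. On tuples from a homogeneous family it vanishes: either the degrees
sum to `0` and the hypothesis applies, or the value is homogeneous of nonzero degree, and such
matrices have zero diagonal. Hence all values of `f` have zero diagonal. Since the image of `f` is
stable under conjugation, every conjugate of a value also has zero diagonal, and conjugating by
transvections brings each off-diagonal entry onto the diagonal.
-/

theorem multilinearMap_ext_of_span_eq_top {R ι N : Type*} [CommSemiring R] [Finite ι]
    {M : ι → Type*} [∀ i, AddCommMonoid (M i)] [∀ i, Module R (M i)]
    [AddCommMonoid N] [Module R N] {f g : MultilinearMap R M N} {κ : ι → Type*}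
    {v : ∀ i, κ i → M i} (hv : ∀ i, Submodule.span R (Set.range (v i)) = ⊤)
    (h : ∀ k : ∀ i, κ i, f (fun i => v i (k i)) = g (fun i => v i (k i))) : f = g := by
  cases nonempty_fintype ι
  classical
  ext x
  have exists_combination (i : ι) : ∃ c, Finsupp.linearCombination R (v i) c = x i :=
    Finsupp.mem_span_range_iff_exists_finsupp.mp (hv i ▸ Submodule.mem_top)
  choose c hc using exists_combination
  simp_rw [← funext hc, Finsupp.linearCombination_apply, Finsupp.sum,
    MultilinearMap.map_sum_finset, MultilinearMap.map_smul_univ, h]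

theorem matrix_eq_zero_of_forall_diag_conj_eq_zero {ι R : Type*} [Fintype ι] [DecidableEq ι]
    [CommRing R] {M : Matrix ι ι R}
    (h : ∀ u : (Matrix ι ι R)ˣ, (ConjAct.toConjAct u • M).diag = 0) : M = 0 := by
  have diag_eq_zero (q : ι) : M q q = 0 := by simpa using congrFun (h 1) q
  ext p q
  obtain rfl | hpq := eq_or_ne p q
  · exact diag_eq_zero p
  let t : Matrix.TransvectionStruct ι R := ⟨q, p, hpq.symm, 1⟩
  let u : (Matrix ι ι R)ˣ := ⟨t.toMatrix, t.inv.toMatrix, t.mul_inv, t.inv_mul⟩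
  calc
    M p q = M q q + 1 * M p q := by rw [diag_eq_zero, zero_add, one_mul]
    _ = (t.toMatrix * M * t.inv.toMatrix) q q :=
      (Matrix.transvection_mul_apply_same q p q 1 M).symm.trans
        (Matrix.mul_transvection_apply_of_ne q p q q hpq.symm (-1) _).symm
    _ = 0 := congrFun (h u) q

section mlEval

variable {K A B : Type} [Field K] [Ring A] [Algebra K A] [Ring B] [Algebra K B] {m : ℕ}

/-- The evaluation `mlEval α` of a multilinear polynomial, bundled as a multilinear map. -/
noncomputable def mlEvalMultilinearMap (α : Equiv.Perm (Fin m) → K) :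
    MultilinearMap K (fun _ : Fin m => A) A :=
  ∑ σ : Equiv.Perm (Fin m), α σ • (MultilinearMap.mkPiAlgebraFin K m A).domDomCongr σ

theorem mlEvalMultilinearMap_apply (α : Equiv.Perm (Fin m) → K) (a : Fin m → A) :
    mlEvalMultilinearMap α a = mlEval α a := by
  simp [mlEvalMultilinearMap, mlEval]

theorem map_mlEval (φ : A →ₐ[K] B) (α : Equiv.Perm (Fin m) → K) (a : Fin m → A) :
    φ (mlEval α a) = mlEval α (fun i => φ (a i)) := by
  simp only [mlEval, map_sum, map_smul, map_list_prod, List.map_ofFn, Function.comp_def]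

theorem smul_mlEval {G : Type*} [Monoid G] [MulSemiringAction G A] [SMulCommClass G K A]
    (u : G) (α : Equiv.Perm (Fin m) → K) (a : Fin m → A) :
    u • mlEval α a = mlEval α (fun i => u • a i) :=
  map_mlEval (MulSemiringAction.toAlgHom K A u) α a

theorem mlEval_mem_graded {Γ : Type*} [AddCommMonoid Γ] (𝒜 : Γ → Submodule K A)
    [SetLike.GradedMonoid 𝒜] (α : Equiv.Perm (Fin m) → K) {g : Fin m → Γ} {a : Fin m → A}
    (ha : ∀ i, a i ∈ 𝒜 (g i)) : mlEval α a ∈ 𝒜 (∑ i, g i) := by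
  refine Submodule.sum_mem _ fun σ _ => Submodule.smul_mem _ _ ?_
  have hσ := SetLike.list_prod_ofFn_mem_graded _ _ fun i => ha (σ i)
  rwa [List.sum_ofFn, Equiv.sum_comp σ g] at hσ

end mlEval

section VasHomog

variable {K : Type} [Field K] {n m : ℕ}

theorem VasHomog.diag_eq_zero {g : ZMod n} {a : Matrix (Fin n) (Fin n) K}
    (ha : VasHomog g a) (hg : g ≠ 0) : a.diag = 0 :=
  funext fun i => ha i i (by simpa using hg.symm)

theorem vasHomog_single (i j : Fin n) (c : K) :
    VasHomog ((j.val : ZMod n) - (i.val : ZMod n)) (Matrix.single i j c) := by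
  intro i' j' h
  refine Matrix.single_apply_of_ne _ _ _ _ _ ?_
  rintro ⟨rfl, rfl⟩
  exact h rfl

variable (K n) in
/-- The homogeneous component `A_g` of the Vasilovsky grading of `Mₙ(K)`, as a submodule. -/
def vasComponent (g : ZMod n) : Submodule K (Matrix (Fin n) (Fin n) K) where
  carrier := {a | VasHomog g a}
  zero_mem' _ _ _ := rfl
  add_mem' ha hb i j h := by simp [ha i j h, hb i j h]
  smul_mem' c a ha i j h := by simp [ha i j h]

instance : SetLike.GradedMonoid (vasComponent K n) where
  one_mem i j hij := Matrix.one_apply_ne (by rintro rfl; simp at hij)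
  mul_mem g h a b ha hb i j hij := by
    rw [Matrix.mul_apply]
    refine Finset.sum_eq_zero fun l _ => ?_
    by_cases hil : (l.val : ZMod n) - (i.val : ZMod n) = g
    · have hlj : (j.val : ZMod n) - (l.val : ZMod n) ≠ h := by
        rintro rfl
        exact hij (by rw [← hil]; ring)
      rw [hb l j hlj, mul_zero]
    · rw [ha i l hil, zero_mul]

theorem vasHomog_mlEval (α : Equiv.Perm (Fin m) → K) {g : Fin m → ZMod n}
    {a : Fin m → Matrix (Fin n) (Fin n) K} (ha : ∀ i, VasHomog (g i) (a i)) :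
    VasHomog (∑ i, g i) (mlEval α a) :=
  mlEval_mem_graded (vasComponent K n) α ha

variable (K n) in
theorem exists_vasHomog_span_eq_top :
    ∃ (k : ℕ) (a : Fin k → Matrix (Fin n) (Fin n) K) (g : Fin k → ZMod n),
      (∀ i, VasHomog (g i) (a i)) ∧ Submodule.span K (Set.range a) = ⊤ := by
  let e := Fintype.equivFin (Fin n × Fin n)
  let b := (Matrix.stdBasis K (Fin n) (Fin n)).reindex e
  refine ⟨_, b, fun k => ((e.symm k).2.val : ZMod n) - ((e.symm k).1.val : ZMod n), fun k => ?_,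
    b.span_eq⟩
  rw [Module.Basis.reindex_apply, Matrix.stdBasis_eq_single]
  exact vasHomog_single _ _ 1

theorem diag_mlEval_eq_zero_of_span_eq_top {ι : Type*} (α : Equiv.Perm (Fin m) → K)
    {a : ι → Matrix (Fin n) (Fin n) K} {g : ι → ZMod n} (ha : ∀ i, VasHomog (g i) (a i))
    (hspan : Submodule.span K (Set.range a) = ⊤)
    (h : ∀ idx : Fin m → ι, ∑ j, g (idx j) = 0 → (mlEval α fun j => a (idx j)).diag = 0)
    (x : Fin m → Matrix (Fin n) (Fin n) K) : (mlEval α x).diag = 0 := by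
  have diag_comp_eq_zero :
      (Matrix.diagLinearMap (Fin n) K K).compMultilinearMap (mlEvalMultilinearMap α) = 0 := by
    refine multilinearMap_ext_of_span_eq_top (fun _ => hspan) fun idx => ?_
    change (mlEvalMultilinearMap α fun j => a (idx j)).diag = 0
    rw [mlEvalMultilinearMap_apply]
    by_cases hdeg : ∑ j, g (idx j) = 0
    · exact h idx hdeg
    · exact (vasHomog_mlEval α fun j => ha (idx j)).diag_eq_zero hdeg
  rw [← mlEvalMultilinearMap_apply]
  exact DFunLike.congr_fun diag_comp_eq_zero x

end VasHomog

theorem stmt_1_general {K : Type} [Field K] {n m : ℕ} {ι : Type*} (α : Equiv.Perm (Fin m) → K)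
    {a : ι → Matrix (Fin n) (Fin n) K} {g : ι → ZMod n} (ha : ∀ i, VasHomog (g i) (a i))
    (hspan : Submodule.span K (Set.range a) = ⊤) :
    (∀ x : Fin m → Matrix (Fin n) (Fin n) K, mlEval α x = 0) ↔
      ∀ idx : Fin m → ι, ∑ j, g (idx j) = 0 → mlEval α (fun j => a (idx j)) = 0 := by
  refine ⟨fun h idx _ => h _, fun h x => matrix_eq_zero_of_forall_diag_conj_eq_zero fun u => ?_⟩
  rw [smul_mlEval]
  refine diag_mlEval_eq_zero_of_span_eq_top α ha hspan (fun idx hdeg => ?_) _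
  rw [h idx hdeg, Matrix.diag_zero]

/-- a multilinear polynomial is a polynomial identity for `Mₙ(K)` iff for every
family of homogeneous matrices spanning `Mₙ(K)`, it vanishes on all tuples from the family whose
degrees sum to zero. -/
theorem stmt_1 {K : Type} [Field K] (n : ℕ) (hn : 2 ≤ n) {m : ℕ}
    (α : Equiv.Perm (Fin m) → K) :
    (∀ a : Fin m → Matrix (Fin n) (Fin n) K, mlEval α a = 0) ↔
      (∀ (k : ℕ) (a : Fin k → Matrix (Fin n) (Fin n) K) (g : Fin k → ZMod n),
        (∀ i, VasHomog (g i) (a i)) →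
        Submodule.span K (Set.range a) = ⊤ →
        ∀ idx : Fin m → Fin k, (∑ j, g (idx j)) = 0 →
          mlEval α (fun j => a (idx j)) = 0) := by
  obtain ⟨k, a, g, ha, hspan⟩ := exists_vasHomog_span_eq_top K n
  exact ⟨fun h _ _ _ _ _ _ _ => h _, fun H => (stmt_1_general α ha hspan).2 (H k a g ha hspan)⟩
end
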